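/- Let (X,Y) be a comonotonic pair of real random variables with distribution functions F and G, and let φ: ℝ×ℝ → ℝ be a Borel function such that φ(X,Y) is integrable. Then E[φ(X,Y)] = ∫₀¹ φ(F⁻¹(u), G⁻¹(u)) du. -/

import Mathlib

/-!
If `f` and `g` vary monotonically together, any two sublevel sets `{f ≤ x}` and `{g ≤ y}` are
nested, so `(f, g)` has joint distribution function `min (F x) (G y)`. Hence the law of such a pair
is determined by its marginals. The quantile functions `F⁻¹` and `G⁻¹` are both monotone on
`(0, 1)` and, under Lebesgue measure, have distribution functions `F` and `G`, so `(F⁻¹, G⁻¹)`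
has the law of any comonotonic pair with these marginals.
-/

open MeasureTheory ENNReal Set

/-- Generalized inverse (quantile function) of a distribution function `F`. -/
noncomputable def qinv (F : ℝ → ℝ) (u : ℝ) : ℝ := sInf {x : ℝ | u ≤ F x}

/-- A pair `(X, Y)` of real random variables is comonotonic if it has the same joint
distribution as `(f(Z), g(Z))` for some random variable `Z` and nondecreasing `f, g`. -/
def Comonotonic {Ω : Type*} [MeasurableSpace Ω] (P : MeasureTheory.Measure Ω)
    (X Y : Ω → ℝ) : Prop :=
  ∃ (Z : Ω → ℝ) (f g : ℝ → ℝ), Measurable Z ∧ Monotone f ∧ Monotone g ∧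
    P.map (fun ω => (X ω, Y ω)) = P.map (fun ω => (f (Z ω), g (Z ω)))

open ProbabilityTheory

section JointLaw

variable {Ω Ω' α β : Type*} [MeasurableSpace Ω] [MeasurableSpace Ω'] {μ : Measure Ω}
  {ν : Measure Ω'} [LinearOrder α] [LinearOrder β]

theorem measure_Iic_inter_Iic_of_monovaryOn {f : Ω → α} {g : Ω → β} {s : Set Ω}
    (hfg : MonovaryOn f g s) (hs : ∀ᵐ ω ∂μ, ω ∈ s) (x : α) (y : β) :
    μ (f ⁻¹' Iic x ∩ g ⁻¹' Iic y) = min (μ (f ⁻¹' Iic x)) (μ (g ⁻¹' Iic y)) := by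
  refine le_antisymm (le_min (measure_mono inter_subset_left) (measure_mono inter_subset_right)) ?_
  by_cases h : ∃ ω ∈ s, f ω ≤ x ∧ y < g ω
  · obtain ⟨ω, hω, hfω, hgω⟩ := h
    refine min_le_of_right_le (measure_mono_ae ?_)
    filter_upwards [hs] with ω' hω' hgω'
    exact ⟨(hfg hω' hω (lt_of_le_of_lt hgω' hgω)).trans hfω, hgω'⟩
  · push Not at h
    refine min_le_of_left_le (measure_mono_ae ?_)
    filter_upwards [hs] with ω hω hfω
    exact ⟨hfω, h ω hω hfω⟩

variable [TopologicalSpace α] [SecondCountableTopology α] [OrderTopology α] [MeasurableSpace α]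
  [BorelSpace α] [TopologicalSpace β] [SecondCountableTopology β] [OrderTopology β]
  [MeasurableSpace β] [BorelSpace β]

theorem measure_eq_of_Iic_prod_Iic {κ η : Measure (α × β)} [IsFiniteMeasure κ]
    (h : ∀ x y, κ (Iic x ×ˢ Iic y) = η (Iic x ×ˢ Iic y)) : κ = η := by
  have prod_Iic {s : Set α} (hs : MeasurableSet s) (y : β) :
      κ (s ×ˢ Iic y) = η (s ×ˢ Iic y) := by
    have hfst : (κ.restrict (Prod.snd ⁻¹' Iic y)).map Prod.fst =
        (η.restrict (Prod.snd ⁻¹' Iic y)).map Prod.fst := by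
      refine Measure.ext_of_Iic _ _ fun x => ?_
      simpa only [Measure.map_apply measurable_fst measurableSet_Iic,
        Measure.restrict_apply (measurable_fst measurableSet_Iic), ← prod_eq] using h x y
    simpa only [Measure.map_apply measurable_fst hs,
      Measure.restrict_apply (measurable_fst hs), ← prod_eq] using DFunLike.congr_fun hfst s
  refine Measure.ext_prod fun {s t} hs ht => ?_
  have hsnd : (κ.restrict (Prod.fst ⁻¹' s)).map Prod.snd =
      (η.restrict (Prod.fst ⁻¹' s)).map Prod.snd := by
    refine Measure.ext_of_Iic _ _ fun y => ?_
    simpa only [Measure.map_apply measurable_snd measurableSet_Iic,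
      Measure.restrict_apply (measurable_snd measurableSet_Iic), inter_comm (Prod.snd ⁻¹' _),
      ← prod_eq] using prod_Iic hs y
  simpa only [Measure.map_apply measurable_snd ht, Measure.restrict_apply (measurable_snd ht),
    inter_comm (Prod.snd ⁻¹' _), ← prod_eq] using DFunLike.congr_fun hsnd t

theorem identDistrib_prodMk_of_monovaryOn [IsFiniteMeasure μ]
    {f : Ω → α} {g : Ω → β} {f' : Ω' → α} {g' : Ω' → β} {s : Set Ω} {s' : Set Ω'}
    (hf : IdentDistrib f f' μ ν) (hg : IdentDistrib g g' μ ν)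
    (hfg : MonovaryOn f g s) (hs : ∀ᵐ ω ∂μ, ω ∈ s)
    (hfg' : MonovaryOn f' g' s') (hs' : ∀ᵐ ω ∂ν, ω ∈ s') :
    IdentDistrib (fun ω => (f ω, g ω)) (fun ω => (f' ω, g' ω)) μ ν where
  aemeasurable_fst := hf.aemeasurable_fst.prodMk hg.aemeasurable_fst
  aemeasurable_snd := hf.aemeasurable_snd.prodMk hg.aemeasurable_snd
  map_eq := by
    refine measure_eq_of_Iic_prod_Iic fun x y => ?_
    have hxy : MeasurableSet (Iic x ×ˢ Iic y) := measurableSet_Iic.prod measurableSet_Iic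
    rw [Measure.map_apply_of_aemeasurable (hf.aemeasurable_fst.prodMk hg.aemeasurable_fst) hxy,
      Measure.map_apply_of_aemeasurable (hf.aemeasurable_snd.prodMk hg.aemeasurable_snd) hxy,
      mk_preimage_prod, mk_preimage_prod, measure_Iic_inter_Iic_of_monovaryOn hfg hs,
      measure_Iic_inter_Iic_of_monovaryOn hfg' hs', hf.measure_mem_eq measurableSet_Iic,
      hg.measure_mem_eq measurableSet_Iic]

end JointLaw

section Quantile

theorem qinv_le_iff (F : StieltjesFunction ℝ) {u : ℝ} (hbdd : ∃ a, F a < u) (hne : ∃ b, u ≤ F b)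
    (x : ℝ) : qinv F u ≤ x ↔ u ≤ F x := by
  obtain ⟨a, ha⟩ := hbdd
  have hbelow : BddBelow {y | u ≤ F y} := ⟨a, fun y hy => (F.mono.reflect_lt (ha.trans_le hy)).le⟩
  refine ⟨fun h => le_trans ?_ (F.mono h), fun h => csInf_le hbelow h⟩
  -- By right continuity, the infimum defining the quantile is attained.
  refine ge_of_tendsto ((F.right_continuous _).mono Ioi_subset_Ici_self) ?_
  filter_upwards [self_mem_nhdsWithin] with y hy
  obtain ⟨z, hz, hzy⟩ := (csInf_lt_iff hbelow hne).1 hy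
  exact le_trans hz (F.mono hzy.le)

variable (μ : Measure ℝ)

theorem qinv_cdf_le_iff {u : ℝ} (hu : u ∈ Ioo (0 : ℝ) 1) (x : ℝ) :
    qinv (cdf μ) u ≤ x ↔ u ≤ cdf μ x :=
  qinv_le_iff (cdf μ) ((tendsto_cdf_atBot μ).eventually_lt_const hu.1).exists
    ((tendsto_cdf_atTop μ).eventually_const_le hu.2).exists x

theorem monotoneOn_qinv_cdf : MonotoneOn (qinv (cdf μ)) (Ioo 0 1) := fun _ hu _ hv huv =>
  (qinv_cdf_le_iff μ hu _).2 (huv.trans ((qinv_cdf_le_iff μ hv _).1 le_rfl))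

theorem aemeasurable_qinv_cdf :
    AEMeasurable (qinv (cdf μ)) (volume.restrict (Ioo (0 : ℝ) 1)) :=
  aemeasurable_restrict_of_monotoneOn measurableSet_Ioo (monotoneOn_qinv_cdf μ)

theorem map_qinv_cdf [IsProbabilityMeasure μ] :
    (volume.restrict (Ioo (0 : ℝ) 1)).map (qinv (cdf μ)) = μ := by
  refine Measure.ext_of_Iic _ _ fun x => ?_
  have hpre : qinv (cdf μ) ⁻¹' Iic x ∩ Ioo 0 1 = Iic (cdf μ x) ∩ Ioo 0 1 := by
    ext u
    exact and_congr_left fun hu => qinv_cdf_le_iff μ hu x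
  calc (volume.restrict (Ioo (0 : ℝ) 1)).map (qinv (cdf μ)) (Iic x)
      = volume (Iic (cdf μ x) ∩ Ioo 0 1) := by
        rw [Measure.map_apply_of_aemeasurable (aemeasurable_qinv_cdf μ) measurableSet_Iic,
          Measure.restrict_apply' measurableSet_Ioo, hpre]
    _ = volume (Ioc 0 1 ∩ Iic (cdf μ x)) := by
        rw [inter_comm]
        exact measure_congr (Ioo_ae_eq_Ioc.inter ae_eq_rfl)
    _ = ENNReal.ofReal (cdf μ x) := by
        rw [Ioc_inter_Iic, Real.volume_Ioc, sub_zero, min_eq_right (cdf_le_one μ x)]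
    _ = μ (Iic x) := ofReal_cdf μ x

end Quantile

section Comonotonic

variable {Ω : Type*} [MeasurableSpace Ω] {P : Measure Ω} {X Y : Ω → ℝ}

theorem eq_cdf_map [IsProbabilityMeasure P] (hX : AEMeasurable X P) {F : ℝ → ℝ}
    (hF : ∀ x, F x = (P {ω | X ω ≤ x}).toReal) : F = cdf (P.map X) := by
  have := Measure.isProbabilityMeasure_map hX
  funext x
  rw [hF, cdf_eq_real, measureReal_def, Measure.map_apply_of_aemeasurable hX measurableSet_Iic]
  rfl

theorem identDistrib_qinv_cdf_map [IsProbabilityMeasure P] (hX : AEMeasurable X P) :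
    IdentDistrib X (qinv (cdf (P.map X))) P (volume.restrict (Ioo (0 : ℝ) 1)) :=
  have := Measure.isProbabilityMeasure_map hX
  ⟨hX, aemeasurable_qinv_cdf _, (map_qinv_cdf _).symm⟩

theorem Comonotonic.exists_monovary_identDistrib (hX : AEMeasurable X P) (hY : AEMeasurable Y P)
    (h : Comonotonic P X Y) : ∃ X' Y' : Ω → ℝ, Monovary X' Y' ∧
      IdentDistrib (fun ω => (X ω, Y ω)) (fun ω => (X' ω, Y' ω)) P P := by
  obtain ⟨Z, f, g, hZ, hf, hg, hlaw⟩ := h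
  exact ⟨f ∘ Z, g ∘ Z, (hf.monovary hg).comp_right Z, hX.prodMk hY,
    ((hf.measurable.comp hZ).prodMk (hg.measurable.comp hZ)).aemeasurable, hlaw⟩

theorem Comonotonic.identDistrib_qinv [IsProbabilityMeasure P] (hX : AEMeasurable X P)
    (hY : AEMeasurable Y P) (h : Comonotonic P X Y) :
    IdentDistrib (fun ω => (X ω, Y ω))
      (fun u => (qinv (cdf (P.map X)) u, qinv (cdf (P.map Y)) u))
      P (volume.restrict (Ioo (0 : ℝ) 1)) := by
  obtain ⟨X', Y', hmono, hlaw⟩ := h.exists_monovary_identDistrib hX hY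
  have hX' : IdentDistrib X X' P P := hlaw.comp measurable_fst
  have hY' : IdentDistrib Y Y' P P := hlaw.comp measurable_snd
  exact hlaw.trans <| identDistrib_prodMk_of_monovaryOn
    (hX'.symm.trans (identDistrib_qinv_cdf_map hX)) (hY'.symm.trans (identDistrib_qinv_cdf_map hY))
    (hmono.monovaryOn univ) (ae_of_all P mem_univ)
    ((monotoneOn_qinv_cdf _).monovaryOn (monotoneOn_qinv_cdf _)) (ae_restrict_mem measurableSet_Ioo)

end Comonotonic

theorem comonotone_expectation_general {Ω E : Type*} [MeasurableSpace Ω] [NormedAddCommGroup E]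
    [NormedSpace ℝ E] [CompleteSpace E] {P : Measure Ω} [IsProbabilityMeasure P] {X Y : Ω → ℝ}
    (hX : AEMeasurable X P) (hY : AEMeasurable Y P) (hcom : Comonotonic P X Y) {F G : ℝ → ℝ}
    (hF : ∀ x, F x = (P {ω | X ω ≤ x}).toReal) (hG : ∀ y, G y = (P {ω | Y ω ≤ y}).toReal)
    {φ : ℝ × ℝ → E} (hφ : AEStronglyMeasurable φ (P.map fun ω => (X ω, Y ω)))
    (hint : Integrable (fun ω => φ (X ω, Y ω)) P) :
    IntegrableOn (fun u => φ (qinv F u, qinv G u)) (Ioo 0 1) ∧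
      ∫ ω, φ (X ω, Y ω) ∂P = ∫ u in Ioo (0 : ℝ) 1, φ (qinv F u, qinv G u) := by
  obtain rfl := eq_cdf_map hX hF
  obtain rfl := eq_cdf_map hY hG
  have hlaw := hcom.identDistrib_qinv hX hY
  have hint' := (integrable_map_measure hφ hlaw.aemeasurable_fst).2 hint
  rw [← integral_map hlaw.aemeasurable_fst hφ]
  rw [hlaw.map_eq] at hφ hint' ⊢
  exact ⟨(integrable_map_measure hφ hlaw.aemeasurable_snd).1 hint',
    integral_map hlaw.aemeasurable_snd hφ⟩

/-- for a comonotonic pair `(X,Y)` with distribution functions `F, G` and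
a Borel `φ` with `φ(X,Y)` integrable, `E[φ(X,Y)] = ∫₀¹ φ(F⁻¹(u), G⁻¹(u)) du`. -/
theorem comonotone_expectation {Ω : Type*} [MeasurableSpace Ω]
    (P : MeasureTheory.Measure Ω) [IsProbabilityMeasure P]
    (X Y : Ω → ℝ) (hX : Measurable X) (hY : Measurable Y)
    (hcom : Comonotonic P X Y)
    (F G : ℝ → ℝ)
    (hF : ∀ x, F x = (P {ω | X ω ≤ x}).toReal)
    (hG : ∀ y, G y = (P {ω | Y ω ≤ y}).toReal)
    (φ : ℝ × ℝ → ℝ) (hφ : Measurable φ)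
    (hint : Integrable (fun ω => φ (X ω, Y ω)) P) :
    ∫ ω, φ (X ω, Y ω) ∂P = ∫ u in Ioo (0:ℝ) 1, φ (qinv F u, qinv G u) :=
  (comonotone_expectation_general hX.aemeasurable hY.aemeasurable hcom hF hG
    hφ.aestronglyMeasurable hint).2
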